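/- Let Ω, U, λ, u be as in the setting. Then the set of critical values of u on the closure of Ω, namely { u(z) : z ∈ closure(Ω) and ∇u(z) = 0 }, is a finite set. -/

import Mathlib

open Metric Set Filter Topology MeasureTheory

noncomputable section

abbrev E2 := EuclideanSpace ℝ (Fin 2)

/-- The Laplacian of `u`: the sum of the two pure second partial derivatives. -/
def lap (u : E2 → ℝ) (z : E2) : ℝ :=
  ∑ i : Fin 2, iteratedFDeriv ℝ 2 u z (fun _ => EuclideanSpace.single i 1)

/-!
On a compact set it suffices that each point `a` has a neighbourhood in which `u a` is the only
possible critical value. If `Δu(a) ≠ 0`, the Hessian at `a` has a kernel of dimension at most one,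
so the critical points near `a` lie on an analytic curve, and a real-analytic function of one
variable is either locally constant or has isolated critical points. If `Δu(a) = 0`, the equation
`Δu + g(u) = 0` gives `g(u(a)) = 0`, hence `Δu = O(u - u(a))` near `a`. The Laplacian lowers degrees
by two, so the leading homogeneous part of `u - u(a)`, of degree `k`, is harmonic, that is
`Re (c zᵏ)` with `c ≠ 0`. Its gradient has norm `k |c| |z|ᵏ⁻¹`, which dominates the gradient of the
remainder, and `a` is an isolated critical point unless `u` is locally constant.
-/

section LocallyUniqueCriticalValue

variable {E : Type*} [NormedAddCommGroup E] [NormedSpace ℝ E]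
  {N : Type*} [NormedAddCommGroup N] [NormedSpace ℝ N]

/-- Near `a`, the only possible critical value of `f` is `f a`. The point `a` itself need not be
critical; if it is not and `f` is `C¹`, there are no critical points near `a`. -/
def LocallyUniqueCriticalValue (f : E → ℝ) (a : E) : Prop :=
  ∀ᶠ z in 𝓝 a, fderiv ℝ f z = 0 → f z = f a

theorem finite_criticalValues_of_isCompact {f : E → ℝ} {K : Set E} (hK : IsCompact K)
    (hf : ∀ a ∈ K, LocallyUniqueCriticalValue f a) :
    (f '' {z ∈ K | fderiv ℝ f z = 0}).Finite := by
  obtain ⟨t, -, hcover⟩ := hK.elim_nhdsWithin_subcover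
    (fun a => {z | fderiv ℝ f z = 0 → f z = f a})
    (fun a ha => mem_nhdsWithin_of_mem_nhds (hf a ha))
  refine (t.finite_toSet.image f).subset ?_
  rintro _ ⟨z, ⟨hz, hcrit⟩, rfl⟩
  obtain ⟨a, ha, hza⟩ := mem_iUnion₂.1 (hcover hz)
  exact ⟨a, ha, (hza hcrit).symm⟩

theorem locallyUniqueCriticalValue_of_fderiv_ne_zero {f : E → ℝ} {a : E} (hf : AnalyticAt ℝ f a)
    (ha : fderiv ℝ f a ≠ 0) : LocallyUniqueCriticalValue f a := by
  filter_upwards [hf.fderiv.continuousAt.eventually_ne ha] with z hz hcrit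
  exact absurd hcrit hz

theorem LocallyUniqueCriticalValue.of_comp {f : E → ℝ} {a : E} {γ : N → E} {c : E → N}
    (h : LocallyUniqueCriticalValue (f ∘ γ) (c a)) (hf : ∀ᶠ z in 𝓝 a, DifferentiableAt ℝ f z)
    (hγ : ∀ᶠ s in 𝓝 (c a), DifferentiableAt ℝ γ s) (hc : ContinuousAt c a) (ha : γ (c a) = a)
    (hmem : ∀ᶠ z in 𝓝 a, fderiv ℝ f z = 0 → γ (c z) = z) :
    LocallyUniqueCriticalValue f a := by
  filter_upwards [hmem, hc.eventually h, hf, hc.eventually hγ] with z hz hval hfz hγz hcrit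
  have hγc : γ (c z) = z := hz hcrit
  have hcomp : fderiv ℝ (f ∘ γ) (c z) = 0 := by
    rw [fderiv_comp _ (hγc.symm ▸ hfz) hγz, hγc, hcrit,
      ContinuousLinearMap.zero_comp]
  simpa only [Function.comp_apply, hγc, ha] using hval hcomp

theorem LocallyUniqueCriticalValue.of_comp_add_equiv {f : E → ℝ} {a : E} (ι : N ≃L[ℝ] E)
    (h : LocallyUniqueCriticalValue (fun y => f (a + ι y)) 0)
    (hf : ∀ᶠ z in 𝓝 a, DifferentiableAt ℝ f z) :
    LocallyUniqueCriticalValue f a :=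
  .of_comp (γ := fun y => a + ι y) (c := fun z => ι.symm (z - a))
    (by simpa only [Function.comp_def, sub_self, map_zero] using h) hf
    (.of_forall fun _ => by fun_prop) (by fun_prop) (by simp) (.of_forall fun z _ => by simp)

theorem locallyUniqueCriticalValue_sub_const_iff {f : E → ℝ} {a : E} (c : ℝ) :
    LocallyUniqueCriticalValue (fun z => f z - c) a ↔ LocallyUniqueCriticalValue f a := by
  simp only [LocallyUniqueCriticalValue, fderiv_sub_const, sub_left_inj]

theorem eventually_eq_of_fderiv_eventually_eq_zero {f : E → ℝ} {a : E} (hf : AnalyticAt ℝ f a)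
    (h : ∀ᶠ z in 𝓝 a, fderiv ℝ f z = 0) : ∀ᶠ z in 𝓝 a, f z = f a := by
  obtain ⟨ε, hε, hball⟩ := Metric.eventually_nhds_iff_ball.1 (h.and hf.eventually_analyticAt)
  filter_upwards [Metric.ball_mem_nhds a hε] with z hz
  exact Metric.isOpen_ball.is_const_of_fderiv_eq_zero (𝕜 := ℝ) (convex_ball a ε).isPreconnected
    (fun x hx => (hball x hx).2.differentiableAt.differentiableWithinAt)
    (fun x hx => (hball x hx).1) hz (Metric.mem_ball_self hε)

theorem locallyUniqueCriticalValue_real {φ : ℝ → ℝ} {s : ℝ} (hφ : AnalyticAt ℝ φ s) :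
    LocallyUniqueCriticalValue φ s := by
  have hderiv : ∀ t, fderiv ℝ φ t = 0 ↔ deriv φ t = 0 := fun t => by
    rw [ContinuousLinearMap.ext_ring_iff, fderiv_apply_one_eq_deriv, zero_apply]
  rcases hφ.deriv.eventually_eq_zero_or_eventually_ne_zero with hzero | hne
  · filter_upwards [eventually_eq_of_fderiv_eventually_eq_zero hφ
      (hzero.mono fun t => (hderiv t).2)] with t ht _ using ht
  · filter_upwards [eventually_nhdsWithin_iff.1 hne] with t ht hcrit
    have hts : t = s := by_contra fun hts => ht hts ((hderiv t).1 hcrit)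
    rw [hts]

theorem locallyUniqueCriticalValue_of_finrank_le_one [FiniteDimensional ℝ N]
    (hN : Module.finrank ℝ N ≤ 1) {φ : N → ℝ} {s : N} (hφ : AnalyticAt ℝ φ s) :
    LocallyUniqueCriticalValue φ s := by
  rcases Nat.le_one_iff_eq_zero_or_eq_one.1 hN with h0 | h1
  · have := Module.finrank_zero_iff.1 h0
    exact Eventually.of_forall fun t _ => by rw [Subsingleton.elim t s]
  · let ι : ℝ ≃L[ℝ] N := ContinuousLinearEquiv.ofFinrankEq (by rw [h1, Module.finrank_self])
    refine .of_comp_add_equiv ι (locallyUniqueCriticalValue_real ?_)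
      (hφ.eventually_analyticAt.mono fun _ h => h.differentiableAt)
    refine AnalyticAt.fun_comp (g := φ) (by simpa using hφ) ?_
    exact analyticAt_const.add (ι.analyticAt 0)

end LocallyUniqueCriticalValue

section NearlyNondegenerate

theorem analyticAt_implicitFunction {E F G : Type*}
    [NormedAddCommGroup E] [NormedSpace ℝ E] [CompleteSpace E]
    [NormedAddCommGroup F] [NormedSpace ℝ F] [CompleteSpace F]
    [NormedAddCommGroup G] [NormedSpace ℝ G] [CompleteSpace G]
    (φ : ImplicitFunctionData ℝ E F G) (hleft : AnalyticAt ℝ φ.leftFun φ.pt)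
    (hright : AnalyticAt ℝ φ.rightFun φ.pt) :
    AnalyticAt ℝ (φ.implicitFunction (φ.leftFun φ.pt)) (φ.rightFun φ.pt) := by
  have hsymm : AnalyticAt ℝ φ.toOpenPartialHomeomorph.symm (φ.prodFun φ.pt) :=
    φ.toOpenPartialHomeomorph.analyticAt_symm' φ.pt_mem_toOpenPartialHomeomorph_source
      (hleft.prod hright) φ.hasStrictFDerivAt.hasFDerivAt.fderiv
  exact AnalyticAt.fun_comp (f := fun y => (φ.leftFun φ.pt, y)) hsymm
    (analyticAt_const.prod analyticAt_id)

variable {E : Type*} [NormedAddCommGroup E] [NormedSpace ℝ E] [FiniteDimensional ℝ E]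

theorem exists_analyticAt_parametrization_levelSet {F : Type*} [NormedAddCommGroup F]
    [NormedSpace ℝ F] {G : E → F} {a : E} {H : E →L[ℝ] F} (hG : AnalyticAt ℝ G a)
    (hH : HasStrictFDerivAt G H a) :
    ∃ (c : E →L[ℝ] H.ker) (γ : H.ker → E), AnalyticAt ℝ γ (c a) ∧
      ∀ᶠ z in 𝓝 a, G z = G a → γ (c z) = z := by
  have := FiniteDimensional.complete ℝ E
  have := FiniteDimensional.complete ℝ H.range
  obtain ⟨p, hp⟩ := Submodule.ClosedComplemented.of_finiteDimensional H.range
  obtain ⟨q, hq⟩ := Submodule.ClosedComplemented.of_finiteDimensional H.ker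
  have hpH : (p ∘L H).toLinearMap = H.toLinearMap.rangeRestrict :=
    LinearMap.ext fun y => hp ⟨H y, LinearMap.mem_range_self _ y⟩
  let φ : ImplicitFunctionData ℝ E H.range H.ker :=
    { leftFun := p ∘ G
      leftDeriv := p ∘L H
      rightFun := q
      rightDeriv := q
      pt := a
      hasStrictFDerivAt_leftFun := p.hasStrictFDerivAt.comp a hH
      hasStrictFDerivAt_rightFun := q.hasStrictFDerivAt
      range_leftDeriv := by rw [hpH, LinearMap.range_rangeRestrict]
      range_rightDeriv := LinearMap.range_eq_of_proj hq
      isCompl_ker := by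
        rw [hpH, LinearMap.ker_rangeRestrict]
        exact LinearMap.isCompl_of_proj hq }
  refine ⟨q, φ.implicitFunction (φ.leftFun a),
    analyticAt_implicitFunction φ ((p.analyticAt _).comp hG) (q.analyticAt a), ?_⟩
  filter_upwards [φ.implicitFunction_apply_image] with z hz hGz
  rwa [show φ.leftFun z = φ.leftFun a from congrArg p hGz] at hz

theorem locallyUniqueCriticalValue_of_finrank_ker_hessian_le_one {f : E → ℝ} {a : E}
    (hf : AnalyticAt ℝ f a) (hker : Module.finrank ℝ (fderiv ℝ (fderiv ℝ f) a).ker ≤ 1) :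
    LocallyUniqueCriticalValue f a := by
  have := FiniteDimensional.complete ℝ E
  by_cases ha : fderiv ℝ f a = 0
  swap
  · exact locallyUniqueCriticalValue_of_fderiv_ne_zero hf ha
  obtain ⟨c, γ, hγ, hlevel⟩ :=
    exists_analyticAt_parametrization_levelSet hf.fderiv hf.fderiv.hasStrictFDerivAt
  have hγa : γ (c a) = a := hlevel.self_of_nhds rfl
  have hfγ : AnalyticAt ℝ (f ∘ γ) (c a) := AnalyticAt.comp (by rwa [hγa]) hγ
  exact .of_comp (locallyUniqueCriticalValue_of_finrank_le_one hker hfγ)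
    (hf.eventually_analyticAt.mono fun _ h => h.differentiableAt)
    (hγ.eventually_analyticAt.mono fun _ h => h.differentiableAt) c.continuous.continuousAt hγa
    (by simpa only [ha] using hlevel)

end NearlyNondegenerate

section PosHomogeneous

open Asymptotics InnerProductSpace Laplacian

variable {E : Type*} [NormedAddCommGroup E] [NormedSpace ℝ E]
  {F : Type*} [NormedAddCommGroup F] [NormedSpace ℝ F]

/-- Positive homogeneity of degree `k`. Only scaling by `t > 0` is required, which is all that the
comparison of growth rates along rays uses. -/
def PosHomogeneous (k : ℕ) (P : E → F) : Prop :=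
  ∀ t : ℝ, 0 < t → ∀ y, P (t • y) = t ^ k • P y

namespace PosHomogeneous

variable {k : ℕ} {P : E → F}

theorem fderiv (hP : PosHomogeneous (k + 1) P) : PosHomogeneous k (fderiv ℝ P) := fun t ht y => by
  have hscale : t • _root_.fderiv ℝ P (t • y) = t ^ (k + 1) • _root_.fderiv ℝ P y := by
    rw [← fderiv_comp_smul, ← Pi.smul_apply, ← fderiv_const_smul_field]
    congr 1
    exact funext (hP t ht)
  rwa [pow_succ', mul_smul, smul_right_inj ht.ne'] at hscale

theorem eq_zero_of_isLittleO (hP : PosHomogeneous k P) (ho : P =o[𝓝 0] fun y => ‖y‖ ^ k) :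
    P = 0 := by
  funext v
  have hbound : ∀ ε > 0, ‖P v‖ ≤ ε * ‖v‖ ^ k := fun ε hε => by
    have hray : Tendsto (fun t : ℝ => t • v) (𝓝[>] 0) (𝓝 0) :=
      tendsto_nhdsWithin_of_tendsto_nhds (Continuous.tendsto' (by fun_prop) _ _ (zero_smul ℝ v))
    obtain ⟨t, hPt, ht⟩ := ((hray.eventually (ho.bound hε)).and self_mem_nhdsWithin).exists
    replace ht : 0 < t := ht
    simp only [hP t ht, norm_smul, norm_pow, norm_mul, norm_norm,
      Real.norm_of_nonneg ht.le, mul_pow, mul_left_comm ε] at hPt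
    exact le_of_mul_le_mul_left hPt (pow_pos ht k)
  have hlim : Tendsto (fun ε : ℝ => ε * ‖v‖ ^ k) (𝓝[>] 0) (𝓝 0) :=
    tendsto_nhdsWithin_of_tendsto_nhds (Continuous.tendsto' (by fun_prop) _ _ (zero_mul _))
  exact norm_le_zero_iff.1 (ge_of_tendsto hlim (eventually_mem_nhdsWithin.mono hbound))

theorem apply_zero (hP : PosHomogeneous (k + 1) P) : P 0 = 0 := by
  have h : (2 : ℝ) ^ (k + 1) • P 0 = (1 : ℝ) • P 0 := by rw [← hP 2 two_pos, smul_zero, one_smul]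
  by_contra h0
  exact (one_lt_pow₀ one_lt_two k.succ_ne_zero).ne' (smul_left_injective ℝ h0 h)

end PosHomogeneous

theorem laplacian_eq_sum_fderiv_fderiv {V : Type*} [NormedAddCommGroup V] [InnerProductSpace ℝ V]
    [FiniteDimensional ℝ V] {ι : Type*} [Fintype ι] (b : OrthonormalBasis ι ℝ V) (f : V → F)
    (x : V) : Δ f x = ∑ i, fderiv ℝ (fderiv ℝ f) x (b i) (b i) := by
  simp only [laplacian_eq_iteratedFDeriv_orthonormalBasis f b, iteratedFDeriv_two_apply,
    Matrix.cons_val_zero, Matrix.cons_val_one]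

variable {V : Type*} [NormedAddCommGroup V] [InnerProductSpace ℝ V]
  [FiniteDimensional ℝ V]

theorem PosHomogeneous.laplacian {k : ℕ} {P : V → F} (hP : PosHomogeneous (k + 2) P) :
    PosHomogeneous k (Δ P) := fun t ht y => by
  simp only [laplacian_eq_sum_fderiv_fderiv (stdOrthonormalBasis ℝ V), hP.fderiv.fderiv t ht,
    smul_apply, Finset.smul_sum]

theorem PosHomogeneous.eq_pow_mul {k : ℕ} {g : ℂ → ℂ} (hg : PosHomogeneous k g)
    (hd : Differentiable ℂ g) (z : ℂ) : g z = z ^ k * g 1 := by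
  refine congrFun (AnalyticOnNhd.eq_of_frequently_eq (𝕜 := ℂ) (z₀ := 0)
    (g := fun w => w ^ k * g 1) (fun w _ => hd.analyticAt w) (fun w _ => by fun_prop) ?_) z
  -- Homogeneity gives the formula on the positive reals, which accumulate at `0`.
  have hreal : Tendsto (fun t : ℝ => (t : ℂ)) (𝓝[>] 0) (𝓝[≠] 0) :=
    tendsto_nhdsWithin_of_tendsto_nhds_of_eventually_within _
      (tendsto_nhdsWithin_of_tendsto_nhds (Complex.continuous_ofReal.tendsto' 0 0 rfl))
      (eventually_mem_nhdsWithin.mono fun t ht => Complex.ofReal_ne_zero.2 (ne_of_gt ht))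
  refine hreal.frequently (Eventually.frequently (eventually_mem_nhdsWithin.mono fun t ht => ?_))
  simpa using hg t ht 1

end PosHomogeneous

section LeadingPart

open Asymptotics InnerProductSpace Laplacian

theorem isBigO_norm_pow_norm_pow {E : Type*} [NormedAddCommGroup E] {m n : ℕ} (h : m ≤ n) :
    (fun y : E => ‖y‖ ^ n) =O[𝓝 0] fun y => ‖y‖ ^ m := by
  rcases h.eq_or_lt with rfl | hlt
  · exact isBigO_refl _ _
  · exact (isLittleO_norm_pow_norm_pow hlt).isBigO

variable {E : Type*} [NormedAddCommGroup E] [NormedSpace ℝ E]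
  {F : Type*} [NormedAddCommGroup F] [NormedSpace ℝ F]

theorem partialSum_succ_eq_of_forall_lt {p : FormalMultilinearSeries ℝ E F} {k : ℕ}
    (hp : ∀ j < k, ∀ y, (p j fun _ => y) = 0) : p.partialSum (k + 1) = fun y => p k fun _ => y := by
  funext y
  rw [FormalMultilinearSeries.partialSum, Finset.sum_range_succ,
    Finset.sum_eq_zero fun j hj => hp j (Finset.mem_range.1 hj) y, zero_add]

theorem coeff_apply_eq_zero_of_isBigO {f : E → F} {p : FormalMultilinearSeries ℝ E F}
    (hp : HasFPowerSeriesAt f p 0) {n : ℕ} (hf : f =O[𝓝 0] fun y => ‖y‖ ^ n) {j : ℕ} (hj : j < n)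
    (y : E) : (p j fun _ => y) = 0 := by
  induction j using Nat.strong_induction_on generalizing y with
  | _ j ih =>
    have hremainder := hp.isBigO_sub_partialSum_pow (j + 1)
    simp only [partialSum_succ_eq_of_forall_lt fun i hi => ih i hi (hi.trans hj), zero_add]
      at hremainder
    have hcoeff := (hf.trans (isBigO_norm_pow_norm_pow hj)).sub hremainder
    simp only [sub_sub_cancel] at hcoeff
    exact hcoeff.continuousMultilinearMap_apply_eq_zero y

theorem exists_hasFPowerSeriesAt_of_isBigO {f : E → F} {n : ℕ} (hf : AnalyticAt ℝ f 0)
    (hO : f =O[𝓝 0] fun y => ‖y‖ ^ n) :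
    ∃ p : FormalMultilinearSeries ℝ E F, HasFPowerSeriesAt f p 0 ∧ ∀ j < n, p j = 0 := by
  obtain ⟨p, r, hp⟩ := hf
  let p' : FormalMultilinearSeries ℝ E F := fun j => if j < n then 0 else p j
  have hp' : ∀ j < n, p' j = 0 := fun j hj => if_pos hj
  refine ⟨p', ⟨r, hp.r_le.trans (FormalMultilinearSeries.radius_le_of_le fun j => ?_), hp.r_pos,
    fun {y} hy => ?_⟩, hp'⟩
  · by_cases hj : j < n <;> simp [p', hj]
  · convert hp.hasSum hy using 2 with j
    by_cases hj : j < n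
    · rw [hp' j hj, coeff_apply_eq_zero_of_isBigO hp.hasFPowerSeriesAt hO hj, zero_apply]
    · simp only [p', if_neg hj]

theorem isBigO_fderiv_of_isBigO [CompleteSpace F] {f : E → F} {n : ℕ} (hf : AnalyticAt ℝ f 0)
    (hO : f =O[𝓝 0] fun y => ‖y‖ ^ (n + 1)) : fderiv ℝ f =O[𝓝 0] fun y => ‖y‖ ^ n := by
  obtain ⟨p, ⟨r, hp⟩, hlow⟩ := exists_hasFPowerSeriesAt_of_isBigO hf hO
  have hderiv : p.derivSeries.partialSum n = 0 := funext fun y =>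
    Finset.sum_eq_zero fun j hj => by
      rw [p.derivSeries_eq_zero (hlow _ (Nat.succ_lt_succ (Finset.mem_range.1 hj))), zero_apply]
  simpa only [hderiv, zero_add, Pi.zero_apply, sub_zero] using
    hp.fderiv.hasFPowerSeriesAt.isBigO_sub_partialSum_pow n

/-- `P` is the leading homogeneous part, of degree `k`, of the Taylor expansion of `f` at `0`. -/
structure IsLeadingPart (f P : E → F) (k : ℕ) : Prop where
  analyticAt : ∀ y, AnalyticAt ℝ P y
  posHomogeneous : PosHomogeneous k P
  isBigO : P =O[𝓝 0] fun y => ‖y‖ ^ k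
  ne_zero : P ≠ 0
  isBigO_sub : (fun y => f y - P y) =O[𝓝 0] fun y => ‖y‖ ^ (k + 1)

theorem exists_isLeadingPart {f : E → F} (hf : AnalyticAt ℝ f 0)
    (hne : ¬ ∀ᶠ y in 𝓝 0, f y = 0) : ∃ P k, IsLeadingPart f P k := by
  classical
  obtain ⟨p, hp⟩ := hf
  have hcoeff : ∃ k, ∃ y, (p k fun _ => y) ≠ 0 := by
    by_contra! hzero
    refine hne (hp.eventually_hasSum.mono fun y hy => ?_)
    simp only [hzero, zero_add] at hy
    exact hy.unique hasSum_zero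
  obtain ⟨v, hv⟩ := Nat.find_spec hcoeff
  have hlow : ∀ j < Nat.find hcoeff, ∀ y, (p j fun _ => y) = 0 := fun j hj => by
    simpa only [not_exists, not_not] using Nat.find_min hcoeff hj
  set k := Nat.find hcoeff
  refine ⟨fun y => p k fun _ => y, k, fun y => ?_, fun t _ y => ?_, ?_, fun h => hv (congrFun h v),
    ?_⟩
  · exact AnalyticAt.fun_comp (g := p k) (f := fun y _ => y) (p k).analyticAt
      (AnalyticAt.pi fun _ => analyticAt_id)
  · simpa only [Finset.prod_const, Finset.card_univ, Fintype.card_fin] using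
      (p k).map_smul_univ (fun _ => t) fun _ => y
  · refine .of_bound ‖p k‖ (.of_forall fun y => ?_)
    simpa only [norm_pow, norm_norm, Finset.prod_const, Finset.card_univ, Fintype.card_fin] using
      (p k).le_opNorm fun _ => y
  · simpa only [partialSum_succ_eq_of_forall_lt hlow, zero_add] using
      hp.isBigO_sub_partialSum_pow (k + 1)

namespace IsLeadingPart

variable {f P : E → F} {k : ℕ}

theorem isBigO_self (h : IsLeadingPart f P k) : f =O[𝓝 0] fun y => ‖y‖ ^ k := by
  simpa only [sub_add_cancel] using
    (h.isBigO_sub.trans (isBigO_norm_pow_norm_pow k.le_succ)).add h.isBigO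

theorem lt_of_isLittleO (h : IsLeadingPart f P k) {m : ℕ} (hf : f =o[𝓝 0] fun y => ‖y‖ ^ m) :
    m < k := by
  by_contra! hkm
  refine h.ne_zero (h.posHomogeneous.eq_zero_of_isLittleO ?_)
  have hfk : f =o[𝓝 0] fun y => ‖y‖ ^ k := hf.trans_isBigO (isBigO_norm_pow_norm_pow hkm)
  simpa only [sub_sub_cancel] using
    hfk.sub (h.isBigO_sub.trans_isLittleO (isLittleO_norm_pow_norm_pow k.lt_succ_self))

end IsLeadingPart

theorem isBigO_laplacian_of_isBigO {V : Type*} [NormedAddCommGroup V] [InnerProductSpace ℝ V]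
    [FiniteDimensional ℝ V] [CompleteSpace F] {f : V → F} {n : ℕ} (hf : AnalyticAt ℝ f 0)
    (hO : f =O[𝓝 0] fun y => ‖y‖ ^ (n + 2)) : Δ f =O[𝓝 0] fun y => ‖y‖ ^ n := by
  let b := stdOrthonormalBasis ℝ V
  let D (i) : (V →L[ℝ] V →L[ℝ] F) →L[ℝ] F :=
    ContinuousLinearMap.apply ℝ F (b i) ∘L ContinuousLinearMap.apply ℝ (V →L[ℝ] F) (b i)
  have hsum : Δ f = fun y => ∑ i, D i (fderiv ℝ (fderiv ℝ f) y) :=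
    funext (laplacian_eq_sum_fderiv_fderiv b f)
  rw [hsum]
  exact .fun_sum fun i _ => ((D i).isBigO_comp _ _).trans
    (isBigO_fderiv_of_isBigO hf.fderiv (isBigO_fderiv_of_isBigO hf hO))

theorem IsLeadingPart.laplacian_eq_zero {V : Type*} [NormedAddCommGroup V] [InnerProductSpace ℝ V]
    [FiniteDimensional ℝ V] [CompleteSpace F] {f P : V → F} {k : ℕ} (h : IsLeadingPart f P (k + 2))
    (hf : AnalyticAt ℝ f 0) (hΔ : Δ f =o[𝓝 0] fun y => ‖y‖ ^ k) : Δ P = 0 := by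
  refine h.posHomogeneous.laplacian.eq_zero_of_isLittleO ?_
  have hsub : Δ (f - P) =ᶠ[𝓝 0] Δ f - Δ P :=
    hf.contDiffAt.laplacian_sub_nhds (h.analyticAt 0).contDiffAt
  have hrem : Δ (f - P) =o[𝓝 0] fun y => ‖y‖ ^ k :=
    (isBigO_laplacian_of_isBigO (n := k + 1) (hf.sub (h.analyticAt 0))
      h.isBigO_sub).trans_isLittleO (isLittleO_norm_pow_norm_pow k.lt_succ_self)
  simpa only [Pi.sub_apply, sub_sub_cancel] using hΔ.sub (hrem.congr' hsub .rfl)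

end LeadingPart

section PlanarDegenerate

open Asymptotics InnerProductSpace Laplacian

theorem exists_mul_pow_le_norm_fderiv_of_harmonic {P : ℂ → ℝ} {k : ℕ}
    (hP : PosHomogeneous (k + 1) P) (hharm : ∀ z, HarmonicAt P z) (hne : P ≠ 0) :
    ∃ c > 0, ∀ y, c * ‖y‖ ^ k ≤ ‖fderiv ℝ P y‖ := by
  -- The Cauchy-Riemann equations for `∂₁P - i ∂₂P` say that `P` is harmonic.
  set g : ℂ → ℂ := fun z => fderiv ℝ P z 1 - Complex.I * fderiv ℝ P z Complex.I
  have hgP : ∀ z, ‖g z‖ ≤ 2 * ‖fderiv ℝ P z‖ := fun z =>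
    calc ‖g z‖
      _ ≤ ‖fderiv ℝ P z 1‖ + ‖fderiv ℝ P z Complex.I‖ := by
        simpa only [norm_mul, Complex.norm_I, one_mul, Complex.norm_real] using
          norm_sub_le (fderiv ℝ P z 1 : ℂ) (Complex.I * fderiv ℝ P z Complex.I)
      _ ≤ ‖fderiv ℝ P z‖ + ‖fderiv ℝ P z‖ := by
        gcongr <;> exact (fderiv ℝ P z).unit_le_opNorm _ (by simp)
      _ = 2 * ‖fderiv ℝ P z‖ := (two_mul _).symm
  have hghom : PosHomogeneous k g := fun t ht z => by
    simp only [g, hP.fderiv t ht z, smul_apply, smul_eq_mul, Complex.real_smul (x := t ^ k)]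
    push_cast
    ring
  have hg : ∀ z, g z = z ^ k * g 1 :=
    hghom.eq_pow_mul fun z => HarmonicAt.differentiableAt_complex_partial (hharm z)
  have hg1 : g 1 ≠ 0 := fun h1 => hne <| funext fun z => by
    have hfderiv : ∀ w, fderiv ℝ P w = 0 := fun w => by
      have hgw : g w = 0 := by rw [hg, h1, mul_zero]
      have h1w : fderiv ℝ P w 1 = 0 := by simpa [g] using congrArg Complex.re hgw
      have hIw : fderiv ℝ P w Complex.I = 0 := by simpa [g] using congrArg Complex.im hgw
      exact ContinuousLinearMap.coe_injective
        (Complex.basisOneI.ext (Fin.forall_fin_two.2 ⟨by simpa using h1w, by simpa using hIw⟩))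
    rw [is_const_of_fderiv_eq_zero (fun w => (hharm w).1.differentiableAt two_ne_zero) hfderiv z 0,
      hP.apply_zero, Pi.zero_apply]
  refine ⟨‖g 1‖ / 2, half_pos (norm_pos_iff.2 hg1), fun y => ?_⟩
  have hy := hgP y
  rw [hg, norm_mul, norm_pow] at hy
  linarith

theorem locallyUniqueCriticalValue_of_norm_fderiv_leadingPart_ge {E : Type*} [NormedAddCommGroup E]
    [NormedSpace ℝ E] {f P : E → ℝ} {k : ℕ} (hf : AnalyticAt ℝ f 0) (hP : IsLeadingPart f P (k + 1))
    {c : ℝ} (hc : 0 < c) (hfderiv : ∀ y, c * ‖y‖ ^ k ≤ ‖fderiv ℝ P y‖) :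
    LocallyUniqueCriticalValue f 0 := by
  have hrem : (fun y => fderiv ℝ f y - fderiv ℝ P y) =o[𝓝 0] fun y => ‖y‖ ^ k := by
    refine IsLittleO.congr' (f₁ := fderiv ℝ fun y => f y - P y) ?_ ?_ .rfl
    · exact (isBigO_fderiv_of_isBigO (hf.sub (hP.analyticAt 0)) hP.isBigO_sub).trans_isLittleO
        (isLittleO_norm_pow_norm_pow k.lt_succ_self)
    · filter_upwards [hf.eventually_analyticAt] with y hy
      exact fderiv_sub hy.differentiableAt (hP.analyticAt y).differentiableAt
  filter_upwards [hrem.bound (half_pos hc)] with y hy hcrit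
  rw [hcrit, zero_sub, norm_neg, norm_pow, norm_norm] at hy
  have hpow : ‖y‖ ^ k ≤ 0 := by nlinarith [hfderiv y]
  rw [norm_eq_zero.1 (eq_zero_of_pow_eq_zero (hpow.antisymm (by positivity)))]

theorem locallyUniqueCriticalValue_zero_of_laplacian_isBigO {f : ℂ → ℝ} (hf : AnalyticAt ℝ f 0)
    (hf0 : f 0 = 0) (hΔ : Δ f =O[𝓝 0] f) : LocallyUniqueCriticalValue f 0 := by
  by_cases hcrit : fderiv ℝ f 0 = 0
  swap
  · exact locallyUniqueCriticalValue_of_fderiv_ne_zero hf hcrit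
  by_cases hne : ∀ᶠ y in 𝓝 0, f y = 0
  · filter_upwards [hne] with y hy _ using hy.trans hf0.symm
  obtain ⟨P, k, hP⟩ := exists_isLeadingPart hf hne
  have hfo : f =o[𝓝 0] fun y => ‖y‖ ^ 1 := by
    simpa [hcrit, hf0, Function.comp_def] using
      (hasFDerivAt_iff_isLittleO_nhds_zero.1 hf.differentiableAt.hasFDerivAt).norm_right
  obtain ⟨m, rfl⟩ := Nat.exists_eq_add_of_le' (hP.lt_of_isLittleO hfo)
  have hΔP : Δ P = 0 := hP.laplacian_eq_zero hf <|
    (hΔ.trans hP.isBigO_self).trans_isLittleO (isLittleO_norm_pow_norm_pow (by lia))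
  obtain ⟨c, hc, hbound⟩ := exists_mul_pow_le_norm_fderiv_of_harmonic hP.posHomogeneous
    (fun z => ⟨(hP.analyticAt z).contDiffAt, by rw [hΔP]⟩) hP.ne_zero
  exact locallyUniqueCriticalValue_of_norm_fderiv_leadingPart_ge hf hP hc hbound

end PlanarDegenerate

section Plane

open Asymptotics InnerProductSpace Laplacian

theorem laplacian_comp_add_linearIsometryEquiv {V W F : Type*} [NormedAddCommGroup V]
    [InnerProductSpace ℝ V] [FiniteDimensional ℝ V] [NormedAddCommGroup W] [InnerProductSpace ℝ W]
    [FiniteDimensional ℝ W] [NormedAddCommGroup F] [NormedSpace ℝ F] (ι : W ≃ₗᵢ[ℝ] V) (f : V → F)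
    (a : V) (y : W) : Δ (fun w => f (a + ι w)) y = Δ f (a + ι y) := by
  have hpull (v : W) : iteratedFDeriv ℝ 2 (fun w => f (a + ι w)) y ![v, v] =
      iteratedFDeriv ℝ 2 f (a + ι y) ![ι v, ι v] := by
    have hcomp := ι.toContinuousLinearEquiv.iteratedFDerivWithin_comp_right (fun v => f (a + v))
      uniqueDiffOn_univ (x := y) (mem_univ _) 2
    simp only [preimage_univ, iteratedFDerivWithin_univ, iteratedFDeriv_comp_add_left] at hcomp
    refine (congrArg (fun q => q ![v, v]) hcomp).trans ?_
    have hvec : (fun i => ι (![v, v] i)) = ![ι v, ι v] := funext (Fin.forall_fin_two.2 ⟨rfl, rfl⟩)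
    exact congrArg (iteratedFDeriv ℝ 2 f (a + ι y)) hvec
  simp only [laplacian_eq_iteratedFDeriv_orthonormalBasis _ (stdOrthonormalBasis ℝ W),
    laplacian_eq_iteratedFDeriv_orthonormalBasis _ ((stdOrthonormalBasis ℝ W).map ι), hpull,
    OrthonormalBasis.map_apply]

variable {E : Type*} [NormedAddCommGroup E] [InnerProductSpace ℝ E] [FiniteDimensional ℝ E]
  {f : E → ℝ} {a : E}

theorem locallyUniqueCriticalValue_of_laplacian_isBigO (hE : Module.finrank ℝ E = 2)
    (hf : AnalyticAt ℝ f a) (hΔ : Δ f =O[𝓝 a] fun z => f z - f a) :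
    LocallyUniqueCriticalValue f a := by
  let ι : ℂ ≃ₗᵢ[ℝ] E :=
    Complex.isometryOfOrthonormal ((stdOrthonormalBasis ℝ E).reindex (finCongr hE))
  have hι : Tendsto (fun y => a + ι y) (𝓝 0) (𝓝 a) :=
    Continuous.tendsto' (by fun_prop) _ _ (by rw [map_zero, add_zero])
  have hΔsub : Δ (fun z => f z - f a) = Δ f := funext fun z => by
    simp only [laplacian_eq_sum_fderiv_fderiv (stdOrthonormalBasis ℝ E),
      funext (fderiv_sub_const (f := f) (𝕜 := ℝ) (x := ·) (f a))]
  have hΔι : Δ (fun y => f (a + ι y) - f a) = fun y => Δ f (a + ι y) := funext fun y => by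
    rw [← hΔsub, ← laplacian_comp_add_linearIsometryEquiv]
  refine (locallyUniqueCriticalValue_sub_const_iff (f a)).1 ?_
  refine .of_comp_add_equiv ι.toContinuousLinearEquiv ?_
    (hf.eventually_analyticAt.mono fun _ h => h.differentiableAt.sub_const _)
  refine locallyUniqueCriticalValue_zero_of_laplacian_isBigO ?_ (by simp) ?_
  · refine AnalyticAt.sub ?_ analyticAt_const
    exact AnalyticAt.fun_comp (g := f) (by simpa using hf)
      (analyticAt_const.add (ι.toContinuousLinearEquiv.analyticAt 0))
  · exact hΔι ▸ hΔ.comp_tendsto hι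

theorem locallyUniqueCriticalValue_of_laplacian_ne_zero (hE : Module.finrank ℝ E = 2)
    (hf : AnalyticAt ℝ f a) (hΔ : Δ f a ≠ 0) : LocallyUniqueCriticalValue f a := by
  refine locallyUniqueCriticalValue_of_finrank_ker_hessian_le_one hf ?_
  set H := fderiv ℝ (fderiv ℝ f) a with hHdef
  have hH : H ≠ 0 := fun h => hΔ <| by
    simp only [laplacian_eq_sum_fderiv_fderiv (stdOrthonormalBasis ℝ E), ← hHdef, h, zero_apply,
      Finset.sum_const_zero]
  have hker : H.ker ≠ ⊤ := fun h =>
    hH (ContinuousLinearMap.coe_injective (LinearMap.ker_eq_top.1 h))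
  exact Nat.le_of_lt_succ ((Submodule.finrank_lt hker).trans_eq hE)

theorem locallyUniqueCriticalValue_of_semilinear (hE : Module.finrank ℝ E = 2)
    (hf : AnalyticAt ℝ f a) {g : ℝ → ℝ} (hg : LocallyLipschitz g)
    (heq : ∀ᶠ z in 𝓝 a, Δ f z + g (f z) = 0) : LocallyUniqueCriticalValue f a := by
  by_cases hga : g (f a) = 0
  · refine locallyUniqueCriticalValue_of_laplacian_isBigO hE hf ?_
    obtain ⟨C, s, hs, hC⟩ := hg (f a)
    refine .of_bound C ?_
    filter_upwards [heq, hf.continuousAt.eventually hs] with z hz hzs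
    have hdist := hC.norm_sub_le hzs (mem_of_mem_nhds hs)
    rwa [hga, sub_zero, ← norm_neg, ← eq_neg_of_add_eq_zero_left hz] at hdist
  · refine locallyUniqueCriticalValue_of_laplacian_ne_zero hE hf fun hΔ => hga ?_
    simpa only [hΔ, zero_add] using heq.self_of_nhds

theorem critical_values_finite_general (hE : Module.finrank ℝ E = 2) {K : Set E} (hK : IsCompact K)
    {u : E → ℝ} (hu : AnalyticOnNhd ℝ u K) {g : ℝ → ℝ} (hg : LocallyLipschitz g)
    (heq : ∀ᶠ z in 𝓝ˢ K, Δ u z + g (u z) = 0) :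
    (u '' {z ∈ K | fderiv ℝ u z = 0}).Finite :=
  finite_criticalValues_of_isCompact hK fun a ha =>
    locallyUniqueCriticalValue_of_semilinear hE (hu a ha) hg
      (heq.filter_mono (nhds_le_nhdsSet ha))

theorem gradient_eq_zero_iff {H : Type*} [NormedAddCommGroup H] [InnerProductSpace ℝ H]
    [CompleteSpace H] {f : H → ℝ} {z : H} : gradient f z = 0 ↔ fderiv ℝ f z = 0 := by
  rw [gradient, map_eq_zero_iff _ (LinearIsometryEquiv.injective _)]

theorem lap_eq_laplacian (u : E2 → ℝ) (z : E2) : lap u z = Δ u z := by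
  simp [lap, laplacian_eq_sum_fderiv_fderiv (EuclideanSpace.basisFun (Fin 2) ℝ),
    iteratedFDeriv_two_apply]

end Plane

/-- The set of critical values of the eigenfunction `u` on `closure Ω` is finite. -/
theorem critical_values_finite
    (Ω U : Set E2) (hΩne : Ω.Nonempty) (hΩo : IsOpen Ω)
    (hΩb : Bornology.IsBounded Ω)
    (hUo : IsOpen U) (hUconn : IsConnected U) (hsub : closure Ω ⊆ U)
    (lam : ℝ) (hlam : 0 < lam)
    (u : E2 → ℝ) (hu : AnalyticOnNhd ℝ u U)
    (hne : ∃ z ∈ U, u z ≠ 0)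
    (heq : ∀ z ∈ U, lap u z + lam * u z = 0) :
    (u '' {z ∈ closure Ω | gradient u z = 0}).Finite := by
  simpa only [gradient_eq_zero_iff] using critical_values_finite_general
    finrank_euclideanSpace_fin hΩb.isCompact_closure (hu.mono hsub) (g := (lam * ·))
    (ContDiff.locallyLipschitz (𝕂 := ℝ) (by fun_prop))
    (eventually_nhdsSet_iff_exists.2 ⟨U, hUo, hsub, fun z hz => lap_eq_laplacian u z ▸ heq z hz⟩)
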